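/- Let λ > 0 and g ∈ L¹(Ω,μ), and define f(x) = ∫_0^{τ−(x)} e^{−λt} g(Φ(x,−t)) dt for x ∈ Ω. Then f ∈ L¹(Ω,μ), f ∈ D(T_max) with λ f − T_max f = g, and for μ−-almost every y ∈ Γ− one has lim_{t→0+} f(Φ(y,t)) = 0 (i.e. f has vanishing incoming trace, so f belongs to the domain of the transport operator with no-incoming boundary conditions). -/

import Mathlib

/-!
Write `f = resolv Ω Φ lam g`. Since `Ω` is open, `t` is below an exit time exactly when the closed
arc of trajectory of length `t` lies in `Ω` (`Stays`, `lt_tauM_iff`); this is an open condition in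
the point and the time jointly, so everything is measurable. Gronwall's inequality makes `Φ` a
continuous action of `ℝ` (`isContFlow_of_ode`), and `(t, x) ↦ (t, Φ x (-t))` then preserves `dt ⊗ μ`
(`measurePreserving_shear`). Pulling the integrable kernel `e^{-λt} g(z)` back along this map and
applying Fubini gives both integrability of `f` and the duality
`∫_Ω f φ dμ = ∫_Ω g(z) ∫_0^{τ₊(z)} e^{-λt} φ(Φ(z,t)) dt dμ(z)` for bounded measurable `φ`
(`resolv_duality`).

For a test function `ψ`, integration by parts along each trajectory
(`adjResolv_deriv`) turns the inner integral for `Dψ` into `λ` times the one for `ψ`, minus `ψ(z)`: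
there is no contribution at `τ₊(z)`, because the trajectory leaves the compact support of `ψ` before
it leaves `Ω`, nor at infinity, because of the exponential. Using the duality for `ψ` and for `Dψ`
gives `T_max f = λ f - g`.

The trace vanishes at every point `y` of `Γ₋`. Indeed `τ₋(Φ(y,t)) = t` for small `t`, hence
`f(Φ(y,t)) = e^{-λt} ∫_0^t e^{λs} g(Φ(y,s)) ds` (`resolv_along`), which tends to `0` when
`g(Φ(y,·))` is integrable near `0`; otherwise all these Bochner integrals equal `0` by convention.
-/

open MeasureTheory Set Filter Topology
open scoped ENNReal NNReal

noncomputable section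

/-- Forward exit time of the flow `Φ` from `Ω` (`∞` if the forward curve never leaves `Ω`). -/
def tauP {N : ℕ} (Ω : Set (Fin N → ℝ)) (Φ : (Fin N → ℝ) → ℝ → (Fin N → ℝ))
    (x : Fin N → ℝ) : ℝ≥0∞ :=
  sInf {s : ℝ≥0∞ | ∃ r : ℝ, 0 < r ∧ s = ENNReal.ofReal r ∧ Φ x r ∉ Ω}

/-- Backward exit time of the flow `Φ` from `Ω`. -/
def tauM {N : ℕ} (Ω : Set (Fin N → ℝ)) (Φ : (Fin N → ℝ) → ℝ → (Fin N → ℝ))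
    (x : Fin N → ℝ) : ℝ≥0∞ :=
  sInf {s : ℝ≥0∞ | ∃ r : ℝ, 0 < r ∧ s = ENNReal.ofReal r ∧ Φ x (-r) ∉ Ω}

/-- `∫_0^τ g(s) ds`, over `(0,∞)` when `τ = ∞`. -/
def curveInt (g : ℝ → ℝ) (τ : ℝ≥0∞) : ℝ :=
  ∫ s in {s : ℝ | 0 < s ∧ ENNReal.ofReal s < τ}, g s

/-- The incoming part `Γ₋` of the boundary `∂Ω`. -/
def GammaM {N : ℕ} (Ω : Set (Fin N → ℝ)) (Φ : (Fin N → ℝ) → ℝ → (Fin N → ℝ)) :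
    Set (Fin N → ℝ) :=
  {y ∈ frontier Ω | ∃ x ∈ Ω, tauM Ω Φ x < ⊤ ∧ y = Φ x (-(tauM Ω Φ x).toReal)}

/-- The outgoing part `Γ₊` of the boundary `∂Ω`. -/
def GammaP {N : ℕ} (Ω : Set (Fin N → ℝ)) (Φ : (Fin N → ℝ) → ℝ → (Fin N → ℝ)) :
    Set (Fin N → ℝ) :=
  {y ∈ frontier Ω | ∃ x ∈ Ω, tauP Ω Φ x < ⊤ ∧ y = Φ x ((tauP Ω Φ x).toReal)}

/-- The boundary measures `μ∓` satisfy the integration-along-characteristics identities. -/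
def IsBoundaryMeasures {N : ℕ} (Ω : Set (Fin N → ℝ)) (Φ : (Fin N → ℝ) → ℝ → (Fin N → ℝ))
    (μ μm μp : Measure (Fin N → ℝ)) : Prop :=
  ∀ f : (Fin N → ℝ) → ℝ, Integrable f (μ.restrict Ω) →
    (∫ x in {x ∈ Ω | tauM Ω Φ x < ⊤}, f x ∂μ
        = ∫ y in GammaM Ω Φ, curveInt (fun s => f (Φ y s)) (tauP Ω Φ y) ∂μm) ∧
    (∫ x in {x ∈ Ω | tauP Ω Φ x < ⊤}, f x ∂μ
        = ∫ y in GammaP Ω Φ, curveInt (fun s => f (Φ y (-s))) (tauM Ω Φ y) ∂μp)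

/-- The identities of Lemma `defmu+-` (beals1 and beals2). -/
def BealsProperty {N : ℕ} (Ω : Set (Fin N → ℝ)) (Φ : (Fin N → ℝ) → ℝ → (Fin N → ℝ))
    (μ μm μp : Measure (Fin N → ℝ)) : Prop :=
  ∀ T : ℝ, 0 < T → ∀ f : ((Fin N → ℝ) × ℝ) → ℝ,
    Integrable f ((μ.restrict Ω).prod (volume.restrict (Ioo (0 : ℝ) T))) →
    (∫ p, f p ∂((μ.restrict Ω).prod (volume.restrict (Ioo (0 : ℝ) T)))
        = (∫ t in Ioo (0 : ℝ) T, (∫ y in GammaP Ω Φ,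
            (∫ s in Ioo (0 : ℝ) ((tauM Ω Φ y ⊓ ENNReal.ofReal t).toReal),
              f (Φ y (-s), t - s)) ∂μp))
          + ∫ x in Ω, (∫ s in Ioo (0 : ℝ) ((tauM Ω Φ x ⊓ ENNReal.ofReal T).toReal),
              f (Φ x (-s), T - s)) ∂μ)
    ∧ (∫ p, f p ∂((μ.restrict Ω).prod (volume.restrict (Ioo (0 : ℝ) T)))
        = (∫ t in Ioo (0 : ℝ) T, (∫ y in GammaM Ω Φ,
            (∫ s in Ioo (0 : ℝ) ((tauP Ω Φ y ⊓ ENNReal.ofReal (T - t)).toReal),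
              f (Φ y s, t + s)) ∂μm))
          + ∫ x in Ω, (∫ s in Ioo (0 : ℝ) ((tauP Ω Φ x ⊓ ENNReal.ofReal T).toReal),
              f (Φ x s, s)) ∂μ)

/-- The class `𝔜` of test functions, together with the derivative `Dψ` along the flow. -/
structure IsTestFun {N : ℕ} (Ω : Set (Fin N → ℝ)) (Φ : (Fin N → ℝ) → ℝ → (Fin N → ℝ))
    (ψ Dψ : (Fin N → ℝ) → ℝ) : Prop where
  measurable : Measurable ψ
  bounded : ∃ C, ∀ x, |ψ x| ≤ C
  compact_support : ∃ K : Set (Fin N → ℝ), IsCompact K ∧ K ⊆ Ω ∧ ∀ x ∉ K, ψ x = 0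
  smooth : ∀ x ∈ Ω, ContDiffOn ℝ 1 (fun s => ψ (Φ x s))
      {s : ℝ | ENNReal.ofReal s < tauP Ω Φ x ∧ ENNReal.ofReal (-s) < tauM Ω Φ x}
  hasDeriv : ∀ x ∈ Ω, HasDerivAt (fun s => ψ (Φ x s)) (Dψ x) 0
  measurableD : Measurable Dψ
  boundedD : ∃ C, ∀ x, |Dψ x| ≤ C

/-- `f ∈ D(T_max)` with `T_max f = g`. -/
def InDomTmax {N : ℕ} (Ω : Set (Fin N → ℝ)) (Φ : (Fin N → ℝ) → ℝ → (Fin N → ℝ))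
    (μ : Measure (Fin N → ℝ)) (f g : (Fin N → ℝ) → ℝ) : Prop :=
  Integrable f (μ.restrict Ω) ∧ Integrable g (μ.restrict Ω) ∧
    ∀ ψ Dψ : (Fin N → ℝ) → ℝ, IsTestFun Ω Φ ψ Dψ →
      ∫ x in Ω, g x * ψ x ∂μ = ∫ x in Ω, f x * Dψ x ∂μ

/-- A sequence of one-dimensional mollifiers supported in `[0, 1/n]`. -/
def IsMollifier (ρ : ℕ → ℝ → ℝ) : Prop :=
  ∀ n : ℕ, ContDiff ℝ (⊤ : ℕ∞) (ρ n) ∧ (∀ s, 0 ≤ ρ n s) ∧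
    (∀ s, s ∉ Icc (0 : ℝ) (1 / (n + 1 : ℝ)) → ρ n s = 0) ∧ (∫ s, ρ n s) = 1

/-- Mollification along the characteristic curves. -/
def moll {N : ℕ} (Ω : Set (Fin N → ℝ)) (Φ : (Fin N → ℝ) → ℝ → (Fin N → ℝ))
    (ρ : ℝ → ℝ) (f : (Fin N → ℝ) → ℝ) (x : Fin N → ℝ) : ℝ :=
  curveInt (fun s => ρ s * f (Φ x (-s))) (tauM Ω Φ x)

/-- The lifted flow `Ψ(ξ,s) = (Φ(ξ₁,s), ξ₂+s)` on `Ω × (0,T)`. -/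
def lflow {N : ℕ} (Φ : (Fin N → ℝ) → ℝ → (Fin N → ℝ)) (ξ : (Fin N → ℝ) × ℝ) (s : ℝ) :
    (Fin N → ℝ) × ℝ := (Φ ξ.1 s, ξ.2 + s)

/-- Forward exit time `ℓ₊` of the lifted flow. -/
def ellP {N : ℕ} (Ω : Set (Fin N → ℝ)) (Φ : (Fin N → ℝ) → ℝ → (Fin N → ℝ)) (T : ℝ)
    (ξ : (Fin N → ℝ) × ℝ) : ℝ≥0∞ := tauP Ω Φ ξ.1 ⊓ ENNReal.ofReal (T - ξ.2)

/-- Backward exit time `ℓ₋` of the lifted flow. -/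
def ellM {N : ℕ} (Ω : Set (Fin N → ℝ)) (Φ : (Fin N → ℝ) → ℝ → (Fin N → ℝ))
    (ξ : (Fin N → ℝ) × ℝ) : ℝ≥0∞ := tauM Ω Φ ξ.1 ⊓ ENNReal.ofReal ξ.2

/-- The incoming part `Σ₋,T` of the boundary of `Ω × (0,T)`. -/
def SigmaM {N : ℕ} (Ω : Set (Fin N → ℝ)) (Φ : (Fin N → ℝ) → ℝ → (Fin N → ℝ)) (T : ℝ) :
    Set ((Fin N → ℝ) × ℝ) :=
  {ζ ∈ frontier (Ω ×ˢ Ioo (0 : ℝ) T) |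
    ∃ ξ ∈ Ω ×ˢ Ioo (0 : ℝ) T, ζ = lflow Φ ξ (-(ellM Ω Φ ξ).toReal)}

/-- The outgoing part `Σ₊,T` of the boundary of `Ω × (0,T)`. -/
def SigmaP {N : ℕ} (Ω : Set (Fin N → ℝ)) (Φ : (Fin N → ℝ) → ℝ → (Fin N → ℝ)) (T : ℝ) :
    Set ((Fin N → ℝ) × ℝ) :=
  {ζ ∈ frontier (Ω ×ˢ Ioo (0 : ℝ) T) |
    ∃ ξ ∈ Ω ×ˢ Ioo (0 : ℝ) T, ζ = lflow Φ ξ ((ellP Ω Φ T ξ).toReal)}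

/-- The semigroup `U₀(t)` with no re-entry boundary conditions. -/
def U0 {N : ℕ} (Ω : Set (Fin N → ℝ)) (Φ : (Fin N → ℝ) → ℝ → (Fin N → ℝ)) (t : ℝ)
    (f : (Fin N → ℝ) → ℝ) (x : Fin N → ℝ) : ℝ :=
  if ENNReal.ofReal t < tauM Ω Φ x then f (Φ x (-t)) else 0

/-- `x ↦ ∫_0^{τ₋(x)} e^{-λ t} g(Φ(x,-t)) dt`. -/
def resolv {N : ℕ} (Ω : Set (Fin N → ℝ)) (Φ : (Fin N → ℝ) → ℝ → (Fin N → ℝ)) (lam : ℝ)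
    (g : (Fin N → ℝ) → ℝ) (x : Fin N → ℝ) : ℝ :=
  curveInt (fun t => Real.exp (-(lam * t)) * g (Φ x (-t))) (tauM Ω Φ x)

/-- The candidate solution of the boundary value problem `(λ - T_max) f = g`, `B⁻ f = u`. -/
def bvpSol {N : ℕ} (Ω : Set (Fin N → ℝ)) (Φ : (Fin N → ℝ) → ℝ → (Fin N → ℝ)) (lam : ℝ)
    (g u : (Fin N → ℝ) → ℝ) (x : Fin N → ℝ) : ℝ :=
  resolv Ω Φ lam g x +
    (if tauM Ω Φ x < ⊤ then
      Real.exp (-(lam * (tauM Ω Φ x).toReal)) * u (Φ x (-(tauM Ω Φ x).toReal)) else 0)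

/-- `f` has incoming trace `u` on `Γ₋`, via an absolutely continuous representative
(along the characteristics, with derivative `-g`). -/
def IsTraceM {N : ℕ} (Ω : Set (Fin N → ℝ)) (Φ : (Fin N → ℝ) → ℝ → (Fin N → ℝ))
    (μ μm : Measure (Fin N → ℝ)) (f g u : (Fin N → ℝ) → ℝ) : Prop :=
  ∃ fs : (Fin N → ℝ) → ℝ, fs =ᵐ[μ.restrict Ω] f ∧
    (∀ᵐ x ∂μ.restrict Ω, ∀ t₁ t₂ : ℝ, t₁ ≤ t₂ →
      ENNReal.ofReal (-t₁) < tauM Ω Φ x → ENNReal.ofReal t₂ < tauP Ω Φ x →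
      fs (Φ x t₁) - fs (Φ x t₂) = ∫ s in t₁..t₂, g (Φ x s)) ∧
    ∀ᵐ y ∂μm.restrict (GammaM Ω Φ),
      Tendsto (fun t => fs (Φ y t)) (𝓝[>] (0 : ℝ)) (𝓝 (u y))

/-- `f` has outgoing trace `w` on `Γ₊`. -/
def IsTraceP {N : ℕ} (Ω : Set (Fin N → ℝ)) (Φ : (Fin N → ℝ) → ℝ → (Fin N → ℝ))
    (μ μp : Measure (Fin N → ℝ)) (f g w : (Fin N → ℝ) → ℝ) : Prop :=
  ∃ fs : (Fin N → ℝ) → ℝ, fs =ᵐ[μ.restrict Ω] f ∧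
    (∀ᵐ x ∂μ.restrict Ω, ∀ t₁ t₂ : ℝ, t₁ ≤ t₂ →
      ENNReal.ofReal (-t₁) < tauM Ω Φ x → ENNReal.ofReal t₂ < tauP Ω Φ x →
      fs (Φ x t₁) - fs (Φ x t₂) = ∫ s in t₁..t₂, g (Φ x s)) ∧
    ∀ᵐ y ∂μp.restrict (GammaP Ω Φ),
      Tendsto (fun t => fs (Φ y (-t))) (𝓝[>] (0 : ℝ)) (𝓝 (w y))

/-! ### The flow of a Lipschitz field -/

/-- The data extracted from the differential equation: `Φ` is a jointly continuous action of `ℝ`. -/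
structure IsContFlow {N : ℕ} (Φ : (Fin N → ℝ) → ℝ → (Fin N → ℝ)) : Prop where
  cont : Continuous (fun p : (Fin N → ℝ) × ℝ => Φ p.1 p.2)
  zero : ∀ x, Φ x 0 = x
  add : ∀ x s t, Φ (Φ x s) t = Φ x (s + t)

/-- Gronwall's inequality in both time directions, for two trajectories of a Lipschitz field. -/
lemma dist_trajectories_le {N : ℕ} {κ : ℝ≥0} {F : (Fin N → ℝ) → (Fin N → ℝ)}
    (hF : LipschitzWith κ F) {a b : ℝ → (Fin N → ℝ)}
    (ha : ∀ s, HasDerivAt a (F (a s)) s) (hb : ∀ s, HasDerivAt b (F (b s)) s) (t : ℝ) :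
    dist (a t) (b t) ≤ dist (a 0) (b 0) * Real.exp (κ * |t|) := by
  rcases le_total 0 t with ht | ht
  · have := dist_le_of_trajectories_ODE (v := fun _ => F) (K := κ) (a := 0) (b := t)
      (f := a) (g := b) (fun _ => hF)
      (fun s _ => (ha s).continuousAt.continuousWithinAt) (fun s _ => (ha s).hasDerivWithinAt)
      (fun s _ => (hb s).continuousAt.continuousWithinAt) (fun s _ => (hb s).hasDerivWithinAt)
      le_rfl t ⟨ht, le_rfl⟩
    simpa [abs_of_nonneg ht] using this
  · have hF' : LipschitzWith κ (fun x => -F x) := fun x y => by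
      simpa [edist_neg_neg] using hF x y
    have hrev : ∀ {c : ℝ → (Fin N → ℝ)}, (∀ s, HasDerivAt c (F (c s)) s) →
        ∀ s, HasDerivAt (fun r => c (-r)) (-F (c (-s))) s := fun {c} hc s => by
      have := (hc (-s)).scomp s (hasDerivAt_neg s)
      rw [neg_one_smul] at this
      exact this
    have := dist_le_of_trajectories_ODE (v := fun _ x => -F x) (K := κ) (a := 0) (b := -t)
      (f := fun r => a (-r)) (g := fun r => b (-r)) (fun _ => hF')
      (fun s _ => (hrev ha s).continuousAt.continuousWithinAt)
      (fun s _ => (hrev ha s).hasDerivWithinAt)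
      (fun s _ => (hrev hb s).continuousAt.continuousWithinAt)
      (fun s _ => (hrev hb s).hasDerivWithinAt)
      le_rfl (-t) ⟨by linarith, le_rfl⟩
    simpa [abs_of_nonpos ht] using this

lemma isContFlow_of_ode {N : ℕ} {κ : ℝ≥0} {F : (Fin N → ℝ) → (Fin N → ℝ)}
    (hF : LipschitzWith κ F) {Φ : (Fin N → ℝ) → ℝ → (Fin N → ℝ)}
    (hΦ0 : ∀ x, Φ x 0 = x) (hΦ' : ∀ x s, HasDerivAt (Φ x) (F (Φ x s)) s) : IsContFlow Φ where
  zero := hΦ0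
  add x s t := by
    have := dist_trajectories_le hF (a := Φ (Φ x s)) (b := fun r => Φ x (s + r)) (hΦ' _)
      (fun r => by simpa using (hΦ' x (s + r)).comp_const_add s r) t
    simpa [hΦ0] using this
  cont := by
    refine continuous_iff_continuousAt.2 fun p => ?_
    obtain ⟨R, hR⟩ := exists_gt |p.2|
    have h := continuousOn_prod_of_continuousOn_lipschitzOnWith
      (fun q : (Fin N → ℝ) × ℝ => Φ q.1 q.2) (s := univ) (t := Ioo (-R) R)
      (Real.toNNReal (Real.exp (κ * R)))
      (fun x _ => fun t _ => (hΦ' x t).continuousAt.continuousWithinAt)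
      (fun t ht => LipschitzOnWith.of_dist_le_mul fun x _ y _ => by
        have := dist_trajectories_le hF (hΦ' x) (hΦ' y) t
        rw [hΦ0, hΦ0, mul_comm] at this
        rw [Real.coe_toNNReal _ (Real.exp_pos _).le]
        refine this.trans ?_
        gcongr
        exact (abs_lt.2 ht).le)
    exact h.continuousAt ((isOpen_univ.prod isOpen_Ioo).mem_nhds ⟨mem_univ _, abs_lt.1 hR⟩)

lemma IsContFlow.cont_right {N : ℕ} {Φ : (Fin N → ℝ) → ℝ → (Fin N → ℝ)} (h : IsContFlow Φ)
    (x : Fin N → ℝ) : Continuous (Φ x) :=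
  h.cont.comp (Continuous.prodMk_right x)

lemma IsContFlow.cont_left {N : ℕ} {Φ : (Fin N → ℝ) → ℝ → (Fin N → ℝ)} (h : IsContFlow Φ)
    (t : ℝ) : Continuous (fun x => Φ x t) :=
  h.cont.comp (Continuous.prodMk_left t)

/-! ### Exit times -/

/-- The arc of trajectory joining `x` to `Φ x t` lies in `Ω`. Here `t` may have either sign, which
is why the arc is parametrized by `r ∈ [0,1]`. -/
def Stays {N : ℕ} (Ω : Set (Fin N → ℝ)) (Φ : (Fin N → ℝ) → ℝ → (Fin N → ℝ))
    (x : Fin N → ℝ) (t : ℝ) : Prop :=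
  ∀ r ∈ Icc (0 : ℝ) 1, Φ x (r * t) ∈ Ω

lemma isOpen_stays {N : ℕ} {Ω : Set (Fin N → ℝ)} {Φ : (Fin N → ℝ) → ℝ → (Fin N → ℝ)}
    (h : IsContFlow Φ) (hΩ : IsOpen Ω) :
    IsOpen {p : (Fin N → ℝ) × ℝ | Stays Ω Φ p.1 p.2} := by
  refine isOpen_iff_mem_nhds.2 fun p hp => ?_
  refine isCompact_Icc.eventually_forall_of_forall_eventually
    (P := fun (q : (Fin N → ℝ) × ℝ) (r : ℝ) => Φ q.1 (r * q.2) ∈ Ω) fun r hr => ?_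
  have hc : Continuous (fun z : ((Fin N → ℝ) × ℝ) × ℝ => Φ z.1.1 (z.2 * z.1.2)) :=
    h.cont.comp (by fun_prop :
      Continuous fun z : ((Fin N → ℝ) × ℝ) × ℝ => (z.1.1, z.2 * z.1.2))
  exact (hΩ.preimage hc).mem_nhds (hp r hr)

lemma stays_flow {N : ℕ} {Ω : Set (Fin N → ℝ)} {Φ : (Fin N → ℝ) → ℝ → (Fin N → ℝ)}
    (h : IsContFlow Φ) (x : Fin N → ℝ) (t : ℝ) :
    Stays Ω Φ (Φ x (-t)) t ↔ Stays Ω Φ x (-t) := by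
  have key : ∀ r : ℝ, Φ (Φ x (-t)) (r * t) = Φ x ((1 - r) * (-t)) := fun r => by
    rw [h.add]; congr 1; ring
  constructor <;> intro H r hr
  · have := H (1 - r) ⟨by linarith [hr.2], by linarith [hr.1]⟩
    rw [key] at this
    simpa using this
  · rw [key]
    exact H (1 - r) ⟨by linarith [hr.2], by linarith [hr.1]⟩

lemma Stays.mem_start {N : ℕ} {Ω : Set (Fin N → ℝ)} {Φ : (Fin N → ℝ) → ℝ → (Fin N → ℝ)}
    (h : IsContFlow Φ) {x : Fin N → ℝ} {t : ℝ} (H : Stays Ω Φ x t) : x ∈ Ω := by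
  simpa [h.zero] using H 0 ⟨le_rfl, zero_le_one⟩

lemma Stays.mem_end {N : ℕ} {Ω : Set (Fin N → ℝ)} {Φ : (Fin N → ℝ) → ℝ → (Fin N → ℝ)}
    {x : Fin N → ℝ} {t : ℝ} (H : Stays Ω Φ x t) : Φ x t ∈ Ω := by
  simpa using H 1 ⟨zero_le_one, le_rfl⟩

lemma stays_iff_Icc {N : ℕ} {Ω : Set (Fin N → ℝ)} {Φ : (Fin N → ℝ) → ℝ → (Fin N → ℝ)}
    {x : Fin N → ℝ} {t : ℝ} (ht : 0 ≤ t) :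
    Stays Ω Φ x t ↔ ∀ s ∈ Icc 0 t, Φ x s ∈ Ω := by
  constructor
  · intro H s hs
    rcases ht.eq_or_lt with rfl | ht
    · have : s = 0 := le_antisymm hs.2 hs.1
      simpa [this] using H 0 ⟨le_rfl, zero_le_one⟩
    · have := H (s / t) ⟨div_nonneg hs.1 ht.le, (div_le_one ht).2 hs.2⟩
      rwa [div_mul_cancel₀ _ ht.ne'] at this
  · intro H r hr
    exact H _ ⟨mul_nonneg hr.1 ht, mul_le_of_le_one_left ht hr.2⟩

lemma stays_neg_iff_Icc {N : ℕ} {Ω : Set (Fin N → ℝ)} {Φ : (Fin N → ℝ) → ℝ → (Fin N → ℝ)}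
    {x : Fin N → ℝ} {t : ℝ} (ht : 0 ≤ t) :
    Stays Ω Φ x (-t) ↔ ∀ s ∈ Icc 0 t, Φ x (-s) ∈ Ω := by
  rw [← stays_iff_Icc (Φ := fun x s => Φ x (-s)) ht]
  simp [Stays]

/-- Because `Ω` is open, being strictly before the backward exit time means exactly that the whole
closed arc stays in `Ω`. -/
lemma lt_tauM_iff {N : ℕ} {Ω : Set (Fin N → ℝ)} {Φ : (Fin N → ℝ) → ℝ → (Fin N → ℝ)}
    (h : IsContFlow Φ) (hΩ : IsOpen Ω) {x : Fin N → ℝ} (hx : x ∈ Ω) {t : ℝ} (ht : 0 ≤ t) :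
    ENNReal.ofReal t < tauM Ω Φ x ↔ Stays Ω Φ x (-t) := by
  constructor
  · intro H
    rw [stays_neg_iff_Icc ht]
    intro s hs
    by_contra hcon
    rcases hs.1.eq_or_lt with rfl | hs0
    · exact hcon (by simpa [h.zero] using hx)
    · have : tauM Ω Φ x ≤ ENNReal.ofReal s := sInf_le ⟨s, hs0, rfl, hcon⟩
      exact absurd (H.trans_le this) (not_lt.2 (ENNReal.ofReal_le_ofReal hs.2))
  · intro H
    have hop : IsOpen {s : ℝ | Stays Ω Φ x (-s)} :=
      (isOpen_stays h hΩ).preimage (by fun_prop : Continuous fun s : ℝ => (x, -s))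
    obtain ⟨ε, hε, hball⟩ := Metric.isOpen_iff.1 hop t H
    have h2 : Stays Ω Φ x (-(t + ε / 2)) := hball (by
      simp [abs_of_pos hε, hε])
    rw [stays_neg_iff_Icc (by linarith)] at h2
    refine lt_of_lt_of_le (b := ENNReal.ofReal (t + ε / 2))
      ((ENNReal.ofReal_lt_ofReal_iff (by linarith)).2 (by linarith)) (le_sInf ?_)
    rintro _ ⟨r, hr, rfl, hr'⟩
    refine ENNReal.ofReal_le_ofReal ?_
    by_contra hlt
    exact hr' (h2 r ⟨hr.le, by linarith⟩)

/-! ### The incoming boundary and the trace -/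

/-- `Γ₋` consists of the points outside `Ω` whose trajectory enters `Ω` immediately. -/
lemma mem_GammaM_iff {N : ℕ} {Ω : Set (Fin N → ℝ)} {Φ : (Fin N → ℝ) → ℝ → (Fin N → ℝ)}
    (h : IsContFlow Φ) (hΩ : IsOpen Ω) {y : Fin N → ℝ} :
    y ∈ GammaM Ω Φ ↔ y ∉ Ω ∧ ∃ δ > 0, ∀ s ∈ Ioc (0 : ℝ) δ, Φ y s ∈ Ω := by
  constructor
  · rintro ⟨hyf, x, hx, hfin, rfl⟩
    have hpos : 0 < tauM Ω Φ x := by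
      have := (lt_tauM_iff h hΩ hx le_rfl).2 (fun r _ => by simpa [h.zero] using hx)
      simpa using this
    have hτ : 0 < (tauM Ω Φ x).toReal := ENNReal.toReal_pos hpos.ne' hfin.ne
    refine ⟨fun hy => (hΩ.frontier_eq ▸ hyf).2 hy, (tauM Ω Φ x).toReal, hτ, fun s hs => ?_⟩
    rw [h.add]
    have h1 : ENNReal.ofReal ((tauM Ω Φ x).toReal - s) < tauM Ω Φ x := by
      rw [ENNReal.ofReal_lt_iff_lt_toReal (by linarith [hs.2]) hfin.ne]
      linarith [hs.1]
    have h2 := ((lt_tauM_iff h hΩ hx (by linarith [hs.2])).1 h1).mem_end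
    convert h2 using 2
    ring
  · rintro ⟨hy, δ, hδ, H⟩
    have hx : Φ y δ ∈ Ω := H δ ⟨hδ, le_rfl⟩
    have hτ : tauM Ω Φ (Φ y δ) = ENNReal.ofReal δ := by
      refine le_antisymm (sInf_le ⟨δ, hδ, rfl, ?_⟩) (le_sInf ?_)
      · simpa [h.add, h.zero] using hy
      · rintro _ ⟨r, hr, rfl, hr'⟩
        refine ENNReal.ofReal_le_ofReal ?_
        by_contra hlt
        rw [h.add] at hr'
        exact hr' (H _ ⟨by linarith, by linarith⟩)
    refine ⟨?_, Φ y δ, hx, by simp [hτ], by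
      rw [hτ, ENNReal.toReal_ofReal hδ.le, h.add]; simp [h.zero]⟩
    rw [hΩ.frontier_eq]
    refine ⟨?_, hy⟩
    have hlim : Tendsto (Φ y) (𝓝[>] 0) (𝓝 y) := by
      have := (h.cont_right y).tendsto 0
      rw [h.zero] at this
      exact this.mono_left nhdsWithin_le_nhds
    exact mem_closure_of_tendsto hlim
      (mem_of_superset (Ioc_mem_nhdsGT hδ) H)

lemma measurableSet_GammaM {N : ℕ} {Ω : Set (Fin N → ℝ)} {Φ : (Fin N → ℝ) → ℝ → (Fin N → ℝ)}
    (h : IsContFlow Φ) (hΩ : IsOpen Ω) : MeasurableSet (GammaM Ω Φ) := by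
  have heq : GammaM Ω Φ = Ωᶜ ∩ ⋃ n : ℕ, ⋂ k : ℕ,
      {y | ∀ s ∈ Icc (1 / (k + 1) : ℝ) (1 / (n + 1)), Φ y s ∈ Ω} := by
    ext y
    rw [mem_GammaM_iff h hΩ]
    simp only [mem_inter_iff, mem_compl_iff, mem_iUnion, mem_iInter, mem_ofPred_eq]
    refine and_congr_right fun _ => ⟨?_, ?_⟩
    · rintro ⟨δ, hδ, H⟩
      obtain ⟨n, hn⟩ := exists_nat_one_div_lt hδ
      exact ⟨n, fun k s hs => H s ⟨lt_of_lt_of_le (by positivity) hs.1, hs.2.trans hn.le⟩⟩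
    · rintro ⟨n, H⟩
      refine ⟨1 / (n + 1), by positivity, fun s hs => ?_⟩
      obtain ⟨k, hk⟩ := exists_nat_one_div_lt hs.1
      exact H k s ⟨hk.le, hs.2⟩
  rw [heq]
  refine hΩ.measurableSet.compl.inter
    (MeasurableSet.iUnion fun n => MeasurableSet.iInter fun k => IsOpen.measurableSet ?_)
  refine isOpen_iff_mem_nhds.2 fun y hy => ?_
  exact isCompact_Icc.eventually_forall_of_forall_eventually
    (P := fun (q : Fin N → ℝ) (s : ℝ) => Φ q s ∈ Ω)
    fun s hs => (hΩ.preimage h.cont).mem_nhds (hy s hs)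

/-- Along a trajectory entering at `y ∈ Γ₋` the backward exit time is the elapsed time, so the
resolvent is a Duhamel integral based at `y`. -/
lemma resolv_along {N : ℕ} {Ω : Set (Fin N → ℝ)} {Φ : (Fin N → ℝ) → ℝ → (Fin N → ℝ)}
    (h : IsContFlow Φ) (hΩ : IsOpen Ω) {y : Fin N → ℝ} (hy : y ∉ Ω) {δ : ℝ}
    (H : ∀ s ∈ Ioc (0 : ℝ) δ, Φ y s ∈ Ω) (lam : ℝ) (g : (Fin N → ℝ) → ℝ)
    {t : ℝ} (ht : t ∈ Ioc (0 : ℝ) δ) :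
    resolv Ω Φ lam g (Φ y t) =
      Real.exp (-(lam * t)) * ∫ s in (0 : ℝ)..t, Real.exp (lam * s) * g (Φ y s) := by
  have hset : {s : ℝ | 0 < s ∧ ENNReal.ofReal s < tauM Ω Φ (Φ y t)} = Ioo 0 t := by
    ext s
    simp only [mem_ofPred_eq, mem_Ioo]
    refine and_congr_right fun hs => ?_
    rw [lt_tauM_iff h hΩ (H t ht) hs.le, stays_neg_iff_Icc hs.le]
    constructor
    · intro h1
      by_contra hlt
      have := h1 t ⟨ht.1.le, by linarith⟩
      rw [h.add, add_neg_cancel, h.zero] at this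
      exact hy this
    · intro hst r hr
      rw [h.add]
      exact H _ ⟨by linarith [hr.2], by linarith [hr.1, ht.2]⟩
  rw [resolv, curveInt, hset, ← integral_Ioc_eq_integral_Ioo,
    ← intervalIntegral.integral_of_le ht.1.le, ← intervalIntegral.integral_const_mul]
  have := intervalIntegral.integral_comp_sub_left (a := 0) (b := t)
    (fun s => Real.exp (-(lam * t)) * (Real.exp (lam * s) * g (Φ y s))) t
  rw [sub_self, sub_zero] at this
  rw [← this]
  refine intervalIntegral.integral_congr fun s _ => ?_
  rw [h.add, ← mul_assoc, ← Real.exp_add]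
  congr 2
  ring

lemma tendsto_resolv_GammaM {N : ℕ} {Ω : Set (Fin N → ℝ)} {Φ : (Fin N → ℝ) → ℝ → (Fin N → ℝ)}
    (h : IsContFlow Φ) (hΩ : IsOpen Ω) (lam : ℝ) (g : (Fin N → ℝ) → ℝ)
    {y : Fin N → ℝ} (hy : y ∈ GammaM Ω Φ) :
    Tendsto (fun t => resolv Ω Φ lam g (Φ y t)) (𝓝[>] (0 : ℝ)) (𝓝 0) := by
  obtain ⟨hyΩ, δ, hδ, H⟩ := (mem_GammaM_iff h hΩ).1 hy
  set q : ℝ → ℝ := fun s => Real.exp (lam * s) * g (Φ y s) with hq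
  have hEq : (fun t => Real.exp (-(lam * t)) * ∫ s in (0 : ℝ)..t, q s) =ᶠ[𝓝[>] (0 : ℝ)]
      fun t => resolv Ω Φ lam g (Φ y t) := by
    filter_upwards [Ioc_mem_nhdsGT hδ] with t ht
    rw [resolv_along h hΩ hyΩ H lam g ht]
  refine Tendsto.congr' hEq ?_
  have hprim : Tendsto (fun t => ∫ s in (0 : ℝ)..t, q s) (𝓝[>] (0 : ℝ)) (𝓝 0) := by
    by_cases hInt : ∃ η > 0, IntervalIntegrable q volume 0 η
    · obtain ⟨η, hη, hInt⟩ := hInt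
      have hc := intervalIntegral.continuousOn_primitive_interval' hInt left_mem_uIcc 0
        left_mem_uIcc
      rw [uIcc_of_le (le_of_lt hη)] at hc
      have := hc.tendsto
      rw [intervalIntegral.integral_same] at this
      refine this.mono_left (nhdsWithin_le_iff.2 ?_)
      exact mem_of_superset (Ioc_mem_nhdsGT hη) Ioc_subset_Icc_self
    · -- If `q` is integrable on no interval `(0, t)`, every integral takes the value `0`
      -- that the Bochner integral assigns to non-integrable functions.
      push Not at hInt
      refine tendsto_const_nhds.congr' ?_
      filter_upwards [self_mem_nhdsWithin] with t ht
      rw [intervalIntegral.integral_undef (hInt t ht)]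
  have hexp : Tendsto (fun t => Real.exp (-(lam * t))) (𝓝[>] (0 : ℝ)) (𝓝 1) := by
    have : Continuous fun t => Real.exp (-(lam * t)) := by fun_prop
    simpa using (this.tendsto 0).mono_left (nhdsWithin_le_nhds (s := Ioi 0))
  simpa using hexp.mul hprim

/-! ### Invariance and duality -/

lemma measurePreserving_flow {N : ℕ} {Φ : (Fin N → ℝ) → ℝ → (Fin N → ℝ)}
    (h : IsContFlow Φ) {μ : Measure (Fin N → ℝ)}
    (hinv : ∀ (A : Set (Fin N → ℝ)) (t : ℝ), MeasurableSet A →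
      μ ((fun x => Φ x t) '' A) = μ A) (t : ℝ) :
    MeasurePreserving (fun x => Φ x (-t)) μ μ := by
  refine ⟨(h.cont_left _).measurable, ?_⟩
  ext A hA
  rw [Measure.map_apply (h.cont_left _).measurable hA, ← hinv A t hA]
  congr 1
  ext x
  constructor
  · intro hx
    exact ⟨Φ x (-t), hx, by simp [h.add, h.zero]⟩
  · rintro ⟨z, hz, rfl⟩
    simpa [h.add, h.zero] using hz

/-- `(t, x) ↦ (t, Φ x (-t))` preserves `dt ⊗ μ`: the change of variables that moves the flow from
the datum `g` onto the test function. -/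
lemma measurePreserving_shear {N : ℕ} {Φ : (Fin N → ℝ) → ℝ → (Fin N → ℝ)}
    (h : IsContFlow Φ) {μ : Measure (Fin N → ℝ)} [SFinite μ]
    (hinv : ∀ (A : Set (Fin N → ℝ)) (t : ℝ), MeasurableSet A →
      μ ((fun x => Φ x t) '' A) = μ A) :
    MeasurePreserving (fun p : ℝ × (Fin N → ℝ) => (p.1, Φ p.2 (-p.1)))
      ((volume.restrict (Ioi (0 : ℝ))).prod μ) ((volume.restrict (Ioi (0 : ℝ))).prod μ) := by
  refine (MeasurePreserving.id _).skew_product (g := fun t x => Φ x (-t)) ?_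
    (Eventually.of_forall fun t => (measurePreserving_flow h hinv t).map_eq)
  exact (h.cont.comp
    (by fun_prop : Continuous fun p : ℝ × (Fin N → ℝ) => (p.2, -p.1))).measurable

open Classical in
/-- The value `φ (Φ z t)` while the trajectory of `z` has not left `Ω`, extended by `0` afterwards. -/
def killed {N : ℕ} (Ω : Set (Fin N → ℝ)) (Φ : (Fin N → ℝ) → ℝ → (Fin N → ℝ))
    (φ : (Fin N → ℝ) → ℝ) (z : Fin N → ℝ) (t : ℝ) : ℝ :=
  if Stays Ω Φ z t then φ (Φ z t) else 0

lemma abs_killed_le {N : ℕ} {Ω : Set (Fin N → ℝ)} {Φ : (Fin N → ℝ) → ℝ → (Fin N → ℝ)}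
    {φ : (Fin N → ℝ) → ℝ} {C : ℝ} (hC : ∀ x, |φ x| ≤ C) (z : Fin N → ℝ) (t : ℝ) :
    |killed Ω Φ φ z t| ≤ C := by
  unfold killed
  split_ifs
  · exact hC _
  · simpa using (abs_nonneg _).trans (hC z)

lemma measurable_killed {N : ℕ} {Ω : Set (Fin N → ℝ)} {Φ : (Fin N → ℝ) → ℝ → (Fin N → ℝ)}
    (h : IsContFlow Φ) (hΩ : IsOpen Ω) {φ : (Fin N → ℝ) → ℝ} (hφ : Measurable φ) :
    Measurable (fun p : ℝ × (Fin N → ℝ) => killed Ω Φ φ p.2 p.1) := by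
  unfold killed
  refine Measurable.ite ?_ ?_ measurable_const
  · exact ((isOpen_stays h hΩ).preimage
      (by fun_prop : Continuous fun p : ℝ × (Fin N → ℝ) => (p.2, p.1))).measurableSet
  · exact hφ.comp (h.cont.comp
      (by fun_prop : Continuous fun p : ℝ × (Fin N → ℝ) => (p.2, p.1))).measurable

/-- Laplace transform along the forward trajectory; as an operator on `φ` it is dual to the
resolvent. -/
def adjResolv {N : ℕ} (Ω : Set (Fin N → ℝ)) (Φ : (Fin N → ℝ) → ℝ → (Fin N → ℝ)) (lam : ℝ)
    (φ : (Fin N → ℝ) → ℝ) (z : Fin N → ℝ) : ℝ :=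
  ∫ t in Ioi (0 : ℝ), killed Ω Φ φ z t * Real.exp (-lam * t)

/-- The resolvent as the `t`-integral of the sheared kernel; off `Ω` both sides vanish. -/
lemma integral_shear_eq {N : ℕ} {Ω : Set (Fin N → ℝ)} {Φ : (Fin N → ℝ) → ℝ → (Fin N → ℝ)}
    (h : IsContFlow Φ) (hΩ : IsOpen Ω) (lam : ℝ) (g φ : (Fin N → ℝ) → ℝ) (x : Fin N → ℝ) :
    ∫ t in Ioi (0 : ℝ), killed Ω Φ φ (Φ x (-t)) t *
        (Real.exp (-lam * t) * Ω.indicator g (Φ x (-t))) =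
      Ω.indicator (fun x => resolv Ω Φ lam g x * φ x) x := by
  by_cases hx : x ∈ Ω
  · rw [indicator_of_mem hx, resolv, curveInt]
    have hop : MeasurableSet {s : ℝ | Stays Ω Φ x (-s)} :=
      ((isOpen_stays h hΩ).preimage (by fun_prop : Continuous fun s : ℝ => (x, -s))).measurableSet
    have hset : {s : ℝ | 0 < s ∧ ENNReal.ofReal s < tauM Ω Φ x} =
        Ioi 0 ∩ {s : ℝ | Stays Ω Φ x (-s)} := by
      ext s
      exact and_congr_right fun hs => lt_tauM_iff h hΩ hx (le_of_lt hs)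
    rw [hset, ← setIntegral_indicator hop, ← integral_mul_const]
    refine integral_congr_ae (Eventually.of_forall fun t => ?_)
    simp only [killed]
    by_cases hs : Stays Ω Φ x (-t)
    · rw [if_pos ((stays_flow h x t).2 hs), indicator_of_mem hs.mem_end, indicator_of_mem (by exact hs), h.add,
        neg_add_cancel, h.zero, neg_mul]
      ring
    · rw [if_neg (mt (stays_flow h x t).1 hs), zero_mul,
        indicator_of_notMem (by exact hs), zero_mul]
  · rw [indicator_of_notMem hx]
    refine (integral_congr_ae (Eventually.of_forall fun t => ?_)).trans (integral_zero _ _)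
    have : ¬ Stays Ω Φ (Φ x (-t)) t := fun hs => hx ((stays_flow h x t).1 hs |>.mem_start h)
    simp [killed, this]

/-- Fubini and invariance of `μ`: the resolvent is integrable, and moves across the pairing to its
forward counterpart. -/
lemma resolv_duality {N : ℕ} {Ω : Set (Fin N → ℝ)} {Φ : (Fin N → ℝ) → ℝ → (Fin N → ℝ)}
    (h : IsContFlow Φ) (hΩ : IsOpen Ω) {μ : Measure (Fin N → ℝ)} [SFinite μ]
    (hinv : ∀ (A : Set (Fin N → ℝ)) (t : ℝ), MeasurableSet A →
      μ ((fun x => Φ x t) '' A) = μ A)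
    {lam : ℝ} (hlam : 0 < lam) {g : (Fin N → ℝ) → ℝ} (hg : Integrable g (μ.restrict Ω))
    {φ : (Fin N → ℝ) → ℝ} (hφ : Measurable φ) {C : ℝ} (hC : ∀ x, |φ x| ≤ C) :
    Integrable (fun x => resolv Ω Φ lam g x * φ x) (μ.restrict Ω) ∧
    Integrable (fun z => g z * adjResolv Ω Φ lam φ z) (μ.restrict Ω) ∧
    ∫ x in Ω, resolv Ω Φ lam g x * φ x ∂μ = ∫ z in Ω, g z * adjResolv Ω Φ lam φ z ∂μ := by
  have hΩm := hΩ.measurableSet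
  set ν := (volume.restrict (Ioi (0 : ℝ))).prod μ with hν
  set Q : ℝ × (Fin N → ℝ) → ℝ := fun p =>
    killed Ω Φ φ p.2 p.1 * (Real.exp (-lam * p.1) * Ω.indicator g p.2) with hQ
  have hG : Integrable (Ω.indicator g) μ := (integrable_indicator_iff hΩm).2 hg
  have hexp : Integrable (fun t : ℝ => Real.exp (-lam * t)) (volume.restrict (Ioi (0 : ℝ))) :=
    exp_neg_integrableOn_Ioi 0 hlam
  have hQi : Integrable Q ν := (hexp.mul_prod hG).bdd_mul
    (measurable_killed h hΩ hφ).aestronglyMeasurable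
    (Eventually.of_forall fun p => abs_killed_le hC _ _)
  have hT := measurePreserving_shear h hinv
  have hQT : Integrable (fun p : ℝ × (Fin N → ℝ) => Q (p.1, Φ p.2 (-p.1))) ν :=
    hT.integrable_comp_of_integrable hQi
  have hInt : ∫ p, Q (p.1, Φ p.2 (-p.1)) ∂ν = ∫ p, Q p ∂ν := by
    have hm := integral_map hT.measurable.aemeasurable (f := Q)
      (by rw [hT.map_eq]; exact hQi.aestronglyMeasurable)
    rw [hT.map_eq] at hm
    exact hm.symm
  have h1 : ∀ x, ∫ t in Ioi (0 : ℝ), Q (t, Φ x (-t)) =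
      Ω.indicator (fun x => resolv Ω Φ lam g x * φ x) x :=
    fun x => integral_shear_eq h hΩ lam g φ x
  have h2 : ∀ z, ∫ t in Ioi (0 : ℝ), Q (t, z) =
      Ω.indicator (fun z => g z * adjResolv Ω Φ lam φ z) z := by
    intro z
    by_cases hz : z ∈ Ω
    · simp only [hQ, indicator_of_mem hz, adjResolv]
      rw [← integral_const_mul]
      refine integral_congr_ae (Eventually.of_forall fun t => ?_)
      ring
    · simp [hQ, indicator_of_notMem hz]
  have i1 := hQT.integral_prod_right
  have i2 := hQi.integral_prod_right
  simp only [h1] at i1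
  simp only [h2] at i2
  refine ⟨(integrable_indicator_iff hΩm).1 i1, (integrable_indicator_iff hΩm).1 i2, ?_⟩
  rw [integral_prod_symm _ hQT, integral_prod_symm _ hQi] at hInt
  simp only [h1, h2] at hInt
  rwa [integral_indicator hΩm, integral_indicator hΩm] at hInt

/-! ### Integration by parts along trajectories -/

/-- The killed trajectory of a test function has no jump at the exit time, since the trajectory
leaves the compact support before it leaves `Ω`. -/
lemma hasDerivAt_killed {N : ℕ} {Ω : Set (Fin N → ℝ)} {Φ : (Fin N → ℝ) → ℝ → (Fin N → ℝ)}
    (h : IsContFlow Φ) (hΩ : IsOpen Ω) {ψ Dψ : (Fin N → ℝ) → ℝ} (hψ : IsTestFun Ω Φ ψ Dψ)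
    (z : Fin N → ℝ) {t : ℝ} (ht : 0 ≤ t) :
    HasDerivAt (killed Ω Φ ψ z) (killed Ω Φ Dψ z t) t := by
  have hop : IsOpen {s : ℝ | Stays Ω Φ z s} :=
    (isOpen_stays h hΩ).preimage (by fun_prop : Continuous fun s : ℝ => (z, s))
  by_cases hs : Stays Ω Φ z t
  · have hd : HasDerivAt (fun s => ψ (Φ z s)) (Dψ (Φ z t)) t := by
      have h0 := hψ.hasDeriv _ hs.mem_end
      simp only [h.add] at h0
      have h1 := HasDerivAt.comp_add_const (f := fun s => ψ (Φ z (t + s))) t (-t)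
        (by simpa using h0)
      simpa using h1
    rw [killed, if_pos hs]
    refine hd.congr_of_eventuallyEq ?_
    filter_upwards [hop.mem_nhds hs] with s hs'
    exact if_pos hs'
  · rw [killed, if_neg hs]
    refine (hasDerivAt_const t (0 : ℝ)).congr_of_eventuallyEq ?_
    obtain ⟨K, hK, hKΩ, hψK⟩ := hψ.compact_support
    by_cases hz : Φ z t ∈ K
    · -- `Φ z t` lies in `Ω`, so the trajectory has left `Ω` at some time `r * t < t`.
      unfold Stays at hs
      push Not at hs
      obtain ⟨r, hr, hrΩ⟩ := hs
      have hr1 : r < 1 := lt_of_le_of_ne hr.2 fun he => hrΩ (by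
        rw [he, one_mul]; exact hKΩ hz)
      have ht0 : 0 < t := lt_of_le_of_ne ht fun he => hrΩ (by
        rw [← he, mul_zero]; rw [← he] at hz; exact hKΩ hz)
      have hlt : r * t < t := by nlinarith
      filter_upwards [Ioi_mem_nhds hlt] with s hs'
      refine if_neg fun hst => hrΩ ?_
      have h0 : 0 ≤ r * t := mul_nonneg hr.1 ht
      exact (stays_iff_Icc (h0.trans (le_of_lt hs'))).1 hst _ ⟨h0, le_of_lt hs'⟩
    · have hopen : IsOpen {s : ℝ | Φ z s ∉ K} :=
        hK.isClosed.isOpen_compl.preimage (h.cont_right z)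
      filter_upwards [hopen.mem_nhds hz] with s hs'
      simp only [killed, hψK _ hs', ite_self]

/-- Integration by parts along the trajectory of `z`. -/
lemma adjResolv_deriv {N : ℕ} {Ω : Set (Fin N → ℝ)} {Φ : (Fin N → ℝ) → ℝ → (Fin N → ℝ)}
    (h : IsContFlow Φ) (hΩ : IsOpen Ω) {ψ Dψ : (Fin N → ℝ) → ℝ} (hψ : IsTestFun Ω Φ ψ Dψ)
    {lam : ℝ} (hlam : 0 < lam) {z : Fin N → ℝ} (hz : z ∈ Ω) :
    adjResolv Ω Φ lam Dψ z = lam * adjResolv Ω Φ lam ψ z - ψ z := by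
  have hexp : IntegrableOn (fun t : ℝ => Real.exp (-lam * t)) (Ioi (0 : ℝ)) :=
    exp_neg_integrableOn_Ioi 0 hlam
  have hInt : ∀ {φ : (Fin N → ℝ) → ℝ}, Measurable φ → (∃ C, ∀ x, |φ x| ≤ C) →
      IntegrableOn (fun t => killed Ω Φ φ z t * Real.exp (-lam * t)) (Ioi (0 : ℝ)) := by
    rintro φ hφ ⟨C, hC⟩
    refine Integrable.bdd_mul hexp ?_ (Eventually.of_forall fun t => abs_killed_le hC z t)
    exact ((measurable_killed h hΩ hφ).comp measurable_prodMk_right).aestronglyMeasurable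
  have hD := hInt hψ.measurableD hψ.boundedD
  have hV := hInt hψ.measurable hψ.bounded
  have hder : ∀ t ∈ Ici (0 : ℝ), HasDerivAt (fun t => killed Ω Φ ψ z t * Real.exp (-lam * t))
      (killed Ω Φ Dψ z t * Real.exp (-lam * t)
        - lam * (killed Ω Φ ψ z t * Real.exp (-lam * t))) t := by
    intro t ht
    have he : HasDerivAt (fun t => Real.exp (-lam * t)) (Real.exp (-lam * t) * (-lam)) t := by
      simpa using ((hasDerivAt_id t).const_mul (-lam)).exp
    refine ((hasDerivAt_killed h hΩ hψ z ht).mul he).congr_deriv ?_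
    ring
  have hlim : Tendsto (fun t => killed Ω Φ ψ z t * Real.exp (-lam * t)) atTop (𝓝 0) := by
    obtain ⟨C, hC⟩ := hψ.bounded
    have he : Tendsto (fun t : ℝ => C * Real.exp (-lam * t)) atTop (𝓝 0) := by
      have := Real.tendsto_exp_atBot.comp
        (tendsto_id.const_mul_atTop_of_neg (neg_neg_iff_pos.2 hlam) :
          Tendsto (fun t : ℝ => -lam * t) atTop atBot)
      simpa using this.const_mul C
    refine squeeze_zero_norm (fun t => ?_) he
    rw [norm_mul, Real.norm_eq_abs, Real.norm_eq_abs, Real.abs_exp]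
    gcongr
    exact abs_killed_le hC z t
  have hfin := integral_Ioi_of_hasDerivAt_of_tendsto' hder (hD.sub (hV.const_mul lam)) hlim
  rw [integral_sub hD (hV.const_mul lam), integral_const_mul] at hfin
  have h0 : killed Ω Φ ψ z 0 = ψ z := by
    have hst : Stays Ω Φ z 0 := fun r _ => by simpa [h.zero] using hz
    rw [killed, if_pos hst, h.zero]
  rw [h0, mul_zero, Real.exp_zero, mul_one] at hfin
  simp only [adjResolv]
  linarith

/-! ### The resolvent equation -/

theorem stmt_18
    {N : ℕ} (hN : 1 ≤ N) (κ : ℝ≥0) (hκ : 0 < κ)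
    (F : (Fin N → ℝ) → (Fin N → ℝ)) (hF : LipschitzWith κ F)
    (Φ : (Fin N → ℝ) → ℝ → (Fin N → ℝ))
    (hΦ0 : ∀ x, Φ x 0 = x)
    (hΦ' : ∀ x s, HasDerivAt (Φ x) (F (Φ x s)) s)
    (Ω : Set (Fin N → ℝ)) (hΩ : IsOpen Ω)
    (μ : Measure (Fin N → ℝ)) [IsFiniteMeasureOnCompacts μ]
    (hinv : ∀ (A : Set (Fin N → ℝ)) (t : ℝ), MeasurableSet A →
      μ ((fun x => Φ x t) '' A) = μ A)
    (μm : Measure (Fin N → ℝ))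
    (hμm : ∀ f : (Fin N → ℝ) → ℝ, Integrable f (μ.restrict Ω) →
      ∫ x in {x ∈ Ω | tauM Ω Φ x < ⊤}, f x ∂μ
        = ∫ y in GammaM Ω Φ, curveInt (fun s => f (Φ y s)) (tauP Ω Φ y) ∂μm)
    (lam : ℝ) (hlam : 0 < lam)
    (g : (Fin N → ℝ) → ℝ) (hg : Integrable g (μ.restrict Ω)) :
    Integrable (resolv Ω Φ lam g) (μ.restrict Ω) ∧
    InDomTmax Ω Φ μ (resolv Ω Φ lam g) (fun x => lam * resolv Ω Φ lam g x - g x) ∧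
    ∀ᵐ y ∂μm.restrict (GammaM Ω Φ),
      Tendsto (fun t => resolv Ω Φ lam g (Φ y t)) (𝓝[>] (0 : ℝ)) (𝓝 0) := by
  have h := isContFlow_of_ode hF hΦ0 hΦ'
  have hfi : Integrable (resolv Ω Φ lam g) (μ.restrict Ω) := by
    simpa using (resolv_duality h hΩ hinv hlam hg (φ := fun _ => 1) measurable_const
      (C := 1) (by simp)).1
  refine ⟨hfi, ⟨hfi, (hfi.const_mul lam).sub hg, fun ψ Dψ hψ => ?_⟩, ?_⟩
  · obtain ⟨C, hC⟩ := hψ.bounded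
    obtain ⟨C', hC'⟩ := hψ.boundedD
    obtain ⟨hfψ, hgψ, heq⟩ := resolv_duality h hΩ hinv hlam hg hψ.measurable hC
    obtain ⟨-, -, heqD⟩ := resolv_duality h hΩ hinv hlam hg hψ.measurableD hC'
    have hgi : Integrable (fun x => g x * ψ x) (μ.restrict Ω) :=
      hg.mul_bdd hψ.measurable.aestronglyMeasurable (Eventually.of_forall hC)
    calc ∫ x in Ω, (lam * resolv Ω Φ lam g x - g x) * ψ x ∂μ
        = ∫ x in Ω, (lam * (resolv Ω Φ lam g x * ψ x) - g x * ψ x) ∂μ := by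
          congr 1; ext x; ring
      _ = lam * ∫ x in Ω, g x * adjResolv Ω Φ lam ψ x ∂μ - ∫ x in Ω, g x * ψ x ∂μ := by
          rw [integral_sub (hfψ.const_mul lam) hgi, integral_const_mul, heq]
      _ = ∫ x in Ω, (lam * (g x * adjResolv Ω Φ lam ψ x) - g x * ψ x) ∂μ := by
          rw [integral_sub (hgψ.const_mul lam) hgi, integral_const_mul]
      _ = ∫ x in Ω, g x * adjResolv Ω Φ lam Dψ x ∂μ := by
          refine setIntegral_congr_fun hΩ.measurableSet fun x hx => ?_
          simp only [adjResolv_deriv h hΩ hψ hlam hx]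
          ring
      _ = ∫ x in Ω, resolv Ω Φ lam g x * Dψ x ∂μ := heqD.symm
  · exact ae_restrict_of_forall_mem (measurableSet_GammaM h hΩ)
      fun y hy => tendsto_resolv_GammaM h hΩ lam g hy

end
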